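/- Let (G,·,e) be a group with braiding operator r, written r(x,y) = (σ_x(y), γ_y(x)). Let Θ = (Θ₁,Θ₂) : G² → G² be a map such that the map F_Θ(g,h) := (σ_{Θ₁(g,h)}(g), σ_{Θ₂(g,h)}(h)) is a bijection of G², Θ₂(e,a) = e = Θ₁(a,e) for all a ∈ G, and for all a,b,c ∈ G the following hold in G: (Θ1) Θ₁(σ_{Θ₁(a·b,c)}(a), σ_{γ_a(Θ₁(a·b,c))}(b)) · Θ₁(a·b,c) = Θ₁(a,b·c); (Θ2) Θ₂(a·b,c) = Θ₂(σ_{Θ₂(a,b·c)}(b), σ_{γ_b(Θ₂(a,b·c))}(c)) · γ_b(Θ₂(a,b·c)); (Θ3) Θ₂(σ_{Θ₁(a·b,c)}(a), σ_{γ_a(Θ₁(a·b,c))}(b)) · γ_a(Θ₁(a·b,c)) = Θ₁(σ_{Θ₂(a,b·c)}(b), σ_{γ_b(Θ₂(a,b·c))}(c)) · Θ₂(a,b·c). Then (G, m∘F_Θ⁻¹, e) is a group (where m is the multiplication of G) and F_Θ∘r∘F_Θ⁻¹ is a braiding operator on it. -/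

import Mathlib

/-!
For `t ∈ G` let `t` act on `G²` by `(b, c) ↦ (σ_t(b), σ_{γ_b(t)}(c))`. This diagonal action covers
`σ_t` along `m` and commutes with `r`. Letting `Θ₂(a, b·c)` act diagonally on `(b, c)` therefore
lifts `F_Θ` along `m₂₃` to a map `Φ` of `G³` commuting with `r₂₃`, and letting `Θ₁(a·b, c)` act
diagonally on `(a, b)` lifts it along `m₁₂` to a map `Ψ` commuting with `r₁₂`. The conditions
(Θ1)–(Θ3) yield `(F_Θ)₁₂ ∘ Ψ = (F_Θ)₂₃ ∘ Φ`, so `(F_Θ, Φ, Ψ)` is a Drinfeld twist. The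
common value of the two composites is a bijection of `G³` intertwining `m₁₂, m₂₃, r₁₂, r₂₃` with
their twisted versions, and every axiom is transported along it.
-/

namespace BraceTwist

/-- Apply a map on `G × G` to the factors 1,2 of a triple: `f₁₂ = f × id`. -/
def E12 {G : Type*} (f : (G × G) ≃ (G × G)) : (G × G × G) ≃ (G × G × G) :=
  ((Equiv.prodAssoc G G G).symm.trans (f.prodCongr (Equiv.refl G))).trans
    (Equiv.prodAssoc G G G)

/-- Apply a map on `G × G` to the factors 2,3 of a triple: `f₂₃ = id × f`. -/
def E23 {G : Type*} (f : (G × G) ≃ (G × G)) : (G × G × G) ≃ (G × G × G) :=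
  (Equiv.refl G).prodCongr f

/-- `m₁₂ : G³ → G²`, multiplying the first two factors. -/
def M12 {G : Type*} (mul : G → G → G) : G × G × G → G × G :=
  fun p => (mul p.1 p.2.1, p.2.2)

/-- `m₂₃ : G³ → G²`, multiplying the last two factors. -/
def M23 {G : Type*} (mul : G → G → G) : G × G × G → G × G :=
  fun p => (p.1, mul p.2.1 p.2.2)

/-- `(mul, e, inv)` is a group structure on `G`. -/
structure IsGroup {G : Type*} (mul : G → G → G) (e : G) (inv : G → G) : Prop where
  mul_assoc : ∀ a b c, mul (mul a b) c = mul a (mul b c)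
  one_mul : ∀ a, mul e a = a
  mul_one : ∀ a, mul a e = a
  inv_mul : ∀ a, mul (inv a) a = e
  mul_inv : ∀ a, mul a (inv a) = e

/-- `r` is a braiding operator on the group `(G, mul, e)`. -/
structure IsBraidingOp {G : Type*} (mul : G → G → G) (e : G)
    (r : (G × G) ≃ (G × G)) : Prop where
  unit_left : ∀ g, r (e, g) = (g, e)
  unit_right : ∀ g, r (g, e) = (e, g)
  br1 : ∀ p : G × G × G, r (M12 mul p) = M23 mul (E12 r (E23 r p))
  br2 : ∀ p : G × G × G, r (M23 mul p) = M12 mul (E23 r (E12 r p))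
  mul_r : ∀ p : G × G, mul (r p).1 (r p).2 = mul p.1 p.2

/-- A Drinfeld twist `(F, Φ, Ψ)` on the group with braiding operator `(G, mul, e, r)`. -/
structure IsGrpTwist {G : Type*} (mul : G → G → G) (e : G)
    (r F : (G × G) ≃ (G × G)) (Φ Ψ : (G × G × G) ≃ (G × G × G)) : Prop where
  t1 : ∀ p, E12 F (Ψ p) = E23 F (Φ p)
  t2 : ∀ p, Φ (E23 r p) = E23 r (Φ p)
  t3 : ∀ p, Ψ (E12 r p) = E12 r (Ψ p)
  g1a : ∀ x y, Ψ (x, y, e) = (x, y, e)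
  g1b : ∀ x y, Φ (e, x, y) = (e, x, y)
  g2a : ∀ x, F (e, x) = (e, x)
  g2b : ∀ x, F (x, e) = (x, e)
  g3 : ∀ p : G × G × G, M23 mul (Φ p) = F (M23 mul p)
  g4 : ∀ p : G × G × G, M12 mul (Ψ p) = F (M12 mul p)

/-- The twisted map `F ∘ r ∘ F⁻¹`. -/
def twisted {G : Type*} (r F : (G × G) ≃ (G × G)) : (G × G) ≃ (G × G) :=
  (F.symm.trans r).trans F

/-- The twisted multiplication `m ∘ F⁻¹`. -/
def twistMul {G : Type*} (mul : G → G → G) (F : (G × G) ≃ (G × G)) : G → G → G :=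
  fun x y => mul (F.symm (x, y)).1 (F.symm (x, y)).2

section Twist

variable {G : Type*} {mul : G → G → G} {e : G} {inv : G → G} {r F : (G × G) ≃ (G × G)}
  {Φ Ψ : (G × G × G) ≃ (G × G × G)}

theorem E12_apply (f : (G × G) ≃ (G × G)) (a b c : G) :
    E12 f (a, b, c) = ((f (a, b)).1, (f (a, b)).2, c) := rfl

theorem E23_apply (f : (G × G) ≃ (G × G)) (a : G) (p : G × G) :
    E23 f (a, p) = (a, f p) := rfl

theorem twistMul_apply (p : G × G) : twistMul mul F (F p).1 (F p).2 = mul p.1 p.2 := by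
  simp only [twistMul, Prod.mk.eta, Equiv.symm_apply_apply]

theorem twistMul_of_apply_eq {p : G × G} {x y : G} (h : F p = (x, y)) :
    twistMul mul F x y = mul p.1 p.2 := by
  rw [← twistMul_apply (mul := mul) (F := F) p, h]

theorem twisted_apply (p : G × G) : twisted r F (F p) = F (r p) := by
  simp only [twisted, Equiv.trans_apply, Equiv.symm_apply_apply]

theorem M12_twistMul_E12 (p : G × G × G) : M12 (twistMul mul F) (E12 F p) = M12 mul p :=
  Prod.ext (twistMul_apply _) rfl

theorem M23_twistMul_E23 (p : G × G × G) : M23 (twistMul mul F) (E23 F p) = M23 mul p :=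
  Prod.ext rfl (twistMul_apply _)

theorem E12_twisted_E12 (p : G × G × G) : E12 (twisted r F) (E12 F p) = E12 F (E12 r p) := by
  obtain ⟨a, b, c⟩ := p
  simp only [E12_apply, Prod.mk.eta, twisted_apply]

theorem E23_twisted_E23 (p : G × G × G) : E23 (twisted r F) (E23 F p) = E23 F (E23 r p) :=
  Prod.ext rfl (twisted_apply p.2)

/-- The bijection `F₂₃ ∘ Φ` of `G³` attached to a Drinfeld twist `(F, Φ, Ψ)`, along which the
structure of `G` is transported; it is also `F₁₂ ∘ Ψ`. -/
def tripleTwist (F : (G × G) ≃ (G × G)) (Φ : (G × G × G) ≃ (G × G × G)) :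
    (G × G × G) ≃ (G × G × G) :=
  Φ.trans (E23 F)

namespace IsGrpTwist

theorem tripleTwist_eq_E12 (h : IsGrpTwist mul e r F Φ Ψ) (p : G × G × G) :
    tripleTwist F Φ p = E12 F (Ψ p) :=
  (h.t1 p).symm

theorem M12_tripleTwist (h : IsGrpTwist mul e r F Φ Ψ) (p : G × G × G) :
    M12 (twistMul mul F) (tripleTwist F Φ p) = F (M12 mul p) := by
  rw [h.tripleTwist_eq_E12, M12_twistMul_E12, h.g4]

theorem M23_tripleTwist (h : IsGrpTwist mul e r F Φ Ψ) (p : G × G × G) :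
    M23 (twistMul mul F) (tripleTwist F Φ p) = F (M23 mul p) := by
  rw [tripleTwist, Equiv.trans_apply, M23_twistMul_E23, h.g3]

theorem E12_tripleTwist (h : IsGrpTwist mul e r F Φ Ψ) (p : G × G × G) :
    E12 (twisted r F) (tripleTwist F Φ p) = tripleTwist F Φ (E12 r p) := by
  rw [h.tripleTwist_eq_E12, h.tripleTwist_eq_E12, E12_twisted_E12, h.t3]

theorem E23_tripleTwist (h : IsGrpTwist mul e r F Φ Ψ) (p : G × G × G) :
    E23 (twisted r F) (tripleTwist F Φ p) = tripleTwist F Φ (E23 r p) := by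
  simp only [tripleTwist, Equiv.trans_apply, E23_twisted_E23, h.t2]

theorem twistMul_assoc (h : IsGrpTwist mul e r F Φ Ψ)
    (hassoc : ∀ a b c, mul (mul a b) c = mul a (mul b c)) (a b c : G) :
    twistMul mul F (twistMul mul F a b) c = twistMul mul F a (twistMul mul F b c) := by
  obtain ⟨⟨x, y, z⟩, hp⟩ := (tripleTwist F Φ).surjective (a, b, c)
  have hab : F (mul x y, z) = (twistMul mul F a b, c) := by
    simpa only [hp, M12] using (h.M12_tripleTwist (x, y, z)).symm
  have hbc : F (x, mul y z) = (a, twistMul mul F b c) := by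
    simpa only [hp, M23] using (h.M23_tripleTwist (x, y, z)).symm
  rw [twistMul_of_apply_eq hab, twistMul_of_apply_eq hbc, hassoc]

theorem exists_twistMul_inverse (h : IsGrpTwist mul e r F Φ Ψ) (hG : IsGroup mul e inv) (a : G) :
    ∃ b, twistMul mul F b a = e ∧ twistMul mul F a b = e := by
  -- The twisted inverse of `a` is the middle entry of the image of `(a, a⁻¹, a)`.
  rcases hp : tripleTwist F Φ (a, inv a, a) with ⟨x, b, y⟩
  have hleft := h.M12_tripleTwist (a, inv a, a)
  have hright := h.M23_tripleTwist (a, inv a, a)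
  simp only [hp, M12, M23, hG.mul_inv, hG.inv_mul, h.g2a, h.g2b, Prod.mk.injEq] at hleft hright
  obtain ⟨hxb, rfl⟩ := hleft
  obtain ⟨rfl, hby⟩ := hright
  exact ⟨b, hby, hxb⟩

theorem exists_isGroup (h : IsGrpTwist mul e r F Φ Ψ) (hG : IsGroup mul e inv) :
    ∃ inv' : G → G, IsGroup (twistMul mul F) e inv' := by
  choose inv' inv_mul mul_inv using h.exists_twistMul_inverse hG
  exact ⟨inv',
    { mul_assoc := h.twistMul_assoc hG.mul_assoc
      one_mul := fun a => (twistMul_of_apply_eq (h.g2a a)).trans (hG.one_mul a)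
      mul_one := fun a => (twistMul_of_apply_eq (h.g2b a)).trans (hG.mul_one a)
      inv_mul := inv_mul
      mul_inv := mul_inv }⟩

theorem isBraidingOp (h : IsGrpTwist mul e r F Φ Ψ) (hbr : IsBraidingOp mul e r) :
    IsBraidingOp (twistMul mul F) e (twisted r F) where
  unit_left g := by rw [← h.g2a g, twisted_apply, hbr.unit_left, h.g2b]
  unit_right g := by rw [← h.g2b g, twisted_apply, hbr.unit_right, h.g2a]
  br1 q := by
    obtain ⟨p, rfl⟩ := (tripleTwist F Φ).surjective q
    rw [h.M12_tripleTwist, twisted_apply, h.E23_tripleTwist, h.E12_tripleTwist,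
      h.M23_tripleTwist, hbr.br1]
  br2 q := by
    obtain ⟨p, rfl⟩ := (tripleTwist F Φ).surjective q
    rw [h.M23_tripleTwist, twisted_apply, h.E12_tripleTwist, h.E23_tripleTwist,
      h.M12_tripleTwist, hbr.br2]
  mul_r q := by
    obtain ⟨p, rfl⟩ := F.surjective q
    rw [twisted_apply, twistMul_apply, twistMul_apply, hbr.mul_r]

end IsGrpTwist

end Twist

section Actions

variable {G : Type*} {mul : G → G → G} {e : G} {inv : G → G} {r : (G × G) ≃ (G × G)}
  {σ γ : G → G → G}

theorem IsGroup.mul_left_cancel (hG : IsGroup mul e inv) {a b c : G}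
    (h : mul a b = mul a c) : b = c := by
  rw [← hG.one_mul b, ← hG.inv_mul a, hG.mul_assoc, h, ← hG.mul_assoc, hG.inv_mul, hG.one_mul]

/-- The diagonal action `t ↦ ((b, c) ↦ (σ_t(b), σ_{γ_b(t)}(c)))` of `G` on `G²`, obtained by
braiding `t` past `b` and then past `c`. -/
def diagAct (σ γ : G → G → G) (t : G) (p : G × G) : G × G :=
  (σ t p.1, σ (γ p.1 t) p.2)

namespace IsBraidingOp

theorem sigma_mul_left (hbr : IsBraidingOp mul e r)
    (hr : ∀ x y, r (x, y) = (σ x y, γ y x)) (a b c : G) : σ (mul a b) c = σ a (σ b c) := by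
  simpa only [M12, M23, E12_apply, E23_apply, hr] using congrArg Prod.fst (hbr.br1 (a, b, c))

theorem sigma_mul_right (hbr : IsBraidingOp mul e r)
    (hr : ∀ x y, r (x, y) = (σ x y, γ y x)) (a b c : G) :
    σ a (mul b c) = mul (σ a b) (σ (γ b a) c) := by
  simpa only [M12, M23, E12_apply, E23_apply, hr] using congrArg Prod.fst (hbr.br2 (a, b, c))

theorem sigma_one_left (hbr : IsBraidingOp mul e r)
    (hr : ∀ x y, r (x, y) = (σ x y, γ y x)) (a : G) : σ e a = a := by
  simpa only [hr] using congrArg Prod.fst (hbr.unit_left a)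

theorem sigma_one_right (hbr : IsBraidingOp mul e r)
    (hr : ∀ x y, r (x, y) = (σ x y, γ y x)) (a : G) : σ a e = e := by
  simpa only [hr] using congrArg Prod.fst (hbr.unit_right a)

theorem gamma_one_right (hbr : IsBraidingOp mul e r)
    (hr : ∀ x y, r (x, y) = (σ x y, γ y x)) (a : G) : γ a e = e := by
  simpa only [hr] using congrArg Prod.snd (hbr.unit_left a)

theorem sigma_mul_gamma (hbr : IsBraidingOp mul e r)
    (hr : ∀ x y, r (x, y) = (σ x y, γ y x)) (a b : G) : mul (σ a b) (γ b a) = mul a b := by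
  simpa only [hr] using hbr.mul_r (a, b)

theorem sigma_bijective (hbr : IsBraidingOp mul e r) (hG : IsGroup mul e inv)
    (hr : ∀ x y, r (x, y) = (σ x y, γ y x)) (a : G) : Function.Bijective (σ a) := by
  refine Function.bijective_iff_has_inverse.2 ⟨σ (inv a), fun x => ?_, fun x => ?_⟩
  · rw [← hbr.sigma_mul_left hr, hG.inv_mul, hbr.sigma_one_left hr]
  · rw [← hbr.sigma_mul_left hr, hG.mul_inv, hbr.sigma_one_left hr]

theorem diagAct_one (hbr : IsBraidingOp mul e r)
    (hr : ∀ x y, r (x, y) = (σ x y, γ y x)) (p : G × G) : diagAct σ γ e p = p := by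
  simp only [diagAct, hbr.gamma_one_right hr, hbr.sigma_one_left hr]

theorem diagAct_mul (hbr : IsBraidingOp mul e r)
    (hr : ∀ x y, r (x, y) = (σ x y, γ y x)) (t : G) (p : G × G) :
    mul (diagAct σ γ t p).1 (diagAct σ γ t p).2 = σ t (mul p.1 p.2) :=
  (hbr.sigma_mul_right hr t p.1 p.2).symm

theorem diagAct_braiding (hbr : IsBraidingOp mul e r) (hG : IsGroup mul e inv)
    (hr : ∀ x y, r (x, y) = (σ x y, γ y x)) (t : G) (p : G × G) :
    diagAct σ γ t (r p) = r (diagAct σ γ t p) := by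
  have fst_eq : (diagAct σ γ t (r p)).1 = (r (diagAct σ γ t p)).1 := by
    simp only [diagAct, hr p.1 p.2, hr, ← hbr.sigma_mul_left hr, hbr.sigma_mul_gamma hr]
  -- Both sides have product `σ_t(p.1 · p.2)`, so the second components agree by cancellation.
  refine Prod.ext fst_eq (hG.mul_left_cancel (a := (diagAct σ γ t (r p)).1) ?_)
  rw [hbr.diagAct_mul hr, hbr.mul_r, fst_eq, hbr.mul_r, hbr.diagAct_mul hr]

end IsBraidingOp

end Actions

section Cotwist

variable {G : Type*} {mul : G → G → G} {e : G} {inv : G → G} {r F : (G × G) ≃ (G × G)}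
  {σ γ Θ₁ Θ₂ : G → G → G}

/-- The map `Φ` of the Drinfeld twist attached to `Θ`: the lift of `F_Θ` along `m₂₃` in which
`Θ₂(a, b·c)` acts diagonally on `(b, c)`. -/
def lift₂₃ (mul σ γ Θ₁ Θ₂ : G → G → G) (p : G × G × G) : G × G × G :=
  (σ (Θ₁ p.1 (mul p.2.1 p.2.2)) p.1, diagAct σ γ (Θ₂ p.1 (mul p.2.1 p.2.2)) p.2)

/-- The map `Ψ` of the Drinfeld twist attached to `Θ`: the lift of `F_Θ` along `m₁₂` in which
`Θ₁(a·b, c)` acts diagonally on `(a, b)`. -/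
def lift₁₂ (mul σ γ Θ₁ Θ₂ : G → G → G) (p : G × G × G) : G × G × G :=
  Equiv.prodAssoc G G G
    (diagAct σ γ (Θ₁ (mul p.1 p.2.1) p.2.2) (p.1, p.2.1), σ (Θ₂ (mul p.1 p.2.1) p.2.2) p.2.2)

theorem M23_lift₂₃ (hbr : IsBraidingOp mul e r) (hr : ∀ x y, r (x, y) = (σ x y, γ y x))
    (hF : ∀ g h, F (g, h) = (σ (Θ₁ g h) g, σ (Θ₂ g h) h)) (p : G × G × G) :
    M23 mul (lift₂₃ mul σ γ Θ₁ Θ₂ p) = F (M23 mul p) := by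
  simp only [M23, lift₂₃, hF, hbr.diagAct_mul hr]

theorem M12_lift₁₂ (hbr : IsBraidingOp mul e r) (hr : ∀ x y, r (x, y) = (σ x y, γ y x))
    (hF : ∀ g h, F (g, h) = (σ (Θ₁ g h) g, σ (Θ₂ g h) h)) (p : G × G × G) :
    M12 mul (lift₁₂ mul σ γ Θ₁ Θ₂ p) = F (M12 mul p) := by
  simp only [M12, lift₁₂, Equiv.prodAssoc_apply, hF, hbr.diagAct_mul hr]

theorem lift₂₃_E23 (hbr : IsBraidingOp mul e r) (hG : IsGroup mul e inv)
    (hr : ∀ x y, r (x, y) = (σ x y, γ y x)) (p : G × G × G) :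
    lift₂₃ mul σ γ Θ₁ Θ₂ (E23 r p) = E23 r (lift₂₃ mul σ γ Θ₁ Θ₂ p) := by
  obtain ⟨a, b, c⟩ := p
  simp only [lift₂₃, E23_apply, hbr.mul_r, hbr.diagAct_braiding hG hr]

theorem lift₁₂_E12 (hbr : IsBraidingOp mul e r) (hG : IsGroup mul e inv)
    (hr : ∀ x y, r (x, y) = (σ x y, γ y x)) (p : G × G × G) :
    lift₁₂ mul σ γ Θ₁ Θ₂ (E12 r p) = E12 r (lift₁₂ mul σ γ Θ₁ Θ₂ p) := by
  obtain ⟨a, b, c⟩ := p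
  simp only [lift₁₂, Equiv.prodAssoc_apply, E12_apply, hbr.mul_r, Prod.mk.eta,
    hbr.diagAct_braiding hG hr]

/-- The coordinates `((a, b·c), b)` on `G³`, whose base coordinate is `m₂₃`. -/
def IsGroup.mul₂₃Coordinates (hG : IsGroup mul e inv) : (G × G × G) ≃ (G × G) × G where
  toFun p := (M23 mul p, p.2.1)
  invFun q := (q.1.1, q.2, mul (inv q.2) q.1.2)
  left_inv p := by simp only [M23, ← hG.mul_assoc, hG.inv_mul, hG.one_mul]
  right_inv q := by simp only [M23, ← hG.mul_assoc, hG.mul_inv, hG.one_mul]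

theorem lift₂₃_bijective (hbr : IsBraidingOp mul e r) (hG : IsGroup mul e inv)
    (hr : ∀ x y, r (x, y) = (σ x y, γ y x))
    (hF : ∀ g h, F (g, h) = (σ (Θ₁ g h) g, σ (Θ₂ g h) h)) :
    Function.Bijective (lift₂₃ mul σ γ Θ₁ Θ₂) := by
  let shear : (G × G) × G ≃ (G × G) × G :=
    F.prodShear fun q => Equiv.ofBijective _ (hbr.sigma_bijective hG hr (Θ₂ q.1 q.2))
  have conj : hG.mul₂₃Coordinates ∘ lift₂₃ mul σ γ Θ₁ Θ₂ = shear ∘ hG.mul₂₃Coordinates :=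
    funext fun p => Prod.ext (M23_lift₂₃ hbr hr hF p) rfl
  rw [← hG.mul₂₃Coordinates.bijective.of_comp_iff', conj]
  exact shear.bijective.comp hG.mul₂₃Coordinates.bijective

/-- `Θ = (Θ₁, Θ₂)` is normalized and satisfies (Θ1), (Θ2), (Θ3), so that `F_Θ` is part of a
Drinfeld twist as soon as it is bijective. -/
structure IsThetaCotwist (mul : G → G → G) (e : G) (σ γ Θ₁ Θ₂ : G → G → G) : Prop where
  one_right : ∀ a, Θ₁ a e = e
  one_left : ∀ a, Θ₂ e a = e
  cond₁ : ∀ a b c, mul (Θ₁ (σ (Θ₁ (mul a b) c) a) (σ (γ a (Θ₁ (mul a b) c)) b))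
      (Θ₁ (mul a b) c) = Θ₁ a (mul b c)
  cond₂ : ∀ a b c, Θ₂ (mul a b) c =
      mul (Θ₂ (σ (Θ₂ a (mul b c)) b) (σ (γ b (Θ₂ a (mul b c))) c)) (γ b (Θ₂ a (mul b c)))
  cond₃ : ∀ a b c, mul (Θ₂ (σ (Θ₁ (mul a b) c) a) (σ (γ a (Θ₁ (mul a b) c)) b))
      (γ a (Θ₁ (mul a b) c)) =
    mul (Θ₁ (σ (Θ₂ a (mul b c)) b) (σ (γ b (Θ₂ a (mul b c))) c)) (Θ₂ a (mul b c))

namespace IsThetaCotwist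

theorem E12_lift₁₂_eq_E23_lift₂₃ (hΘ : IsThetaCotwist mul e σ γ Θ₁ Θ₂)
    (hbr : IsBraidingOp mul e r) (hr : ∀ x y, r (x, y) = (σ x y, γ y x))
    (hF : ∀ g h, F (g, h) = (σ (Θ₁ g h) g, σ (Θ₂ g h) h)) (p : G × G × G) :
    E12 F (lift₁₂ mul σ γ Θ₁ Θ₂ p) = E23 F (lift₂₃ mul σ γ Θ₁ Θ₂ p) := by
  obtain ⟨a, b, c⟩ := p
  -- Merging nested actions by `σ_x σ_y = σ_{x·y}`, the three components are (Θ1), (Θ3), (Θ2).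
  simp only [lift₁₂, Equiv.prodAssoc_apply, lift₂₃, diagAct, E12_apply, E23_apply, hF,
    ← hbr.sigma_mul_left hr, hΘ.cond₁, hΘ.cond₃, ← hΘ.cond₂]

theorem lift₁₂_bijective (hΘ : IsThetaCotwist mul e σ γ Θ₁ Θ₂) (hbr : IsBraidingOp mul e r)
    (hG : IsGroup mul e inv) (hr : ∀ x y, r (x, y) = (σ x y, γ y x))
    (hF : ∀ g h, F (g, h) = (σ (Θ₁ g h) g, σ (Θ₂ g h) h)) :
    Function.Bijective (lift₁₂ mul σ γ Θ₁ Θ₂) := by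
  have comp_eq : E12 F ∘ lift₁₂ mul σ γ Θ₁ Θ₂ = E23 F ∘ lift₂₃ mul σ γ Θ₁ Θ₂ :=
    funext (hΘ.E12_lift₁₂_eq_E23_lift₂₃ hbr hr hF)
  rw [← (E12 F).bijective.of_comp_iff', comp_eq]
  exact (E23 F).bijective.comp (lift₂₃_bijective hbr hG hr hF)

theorem isGrpTwist (hΘ : IsThetaCotwist mul e σ γ Θ₁ Θ₂) (hbr : IsBraidingOp mul e r)
    (hG : IsGroup mul e inv) (hr : ∀ x y, r (x, y) = (σ x y, γ y x))
    (hF : ∀ g h, F (g, h) = (σ (Θ₁ g h) g, σ (Θ₂ g h) h)) :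
    IsGrpTwist mul e r F (Equiv.ofBijective _ (lift₂₃_bijective hbr hG hr hF))
      (Equiv.ofBijective _ (hΘ.lift₁₂_bijective hbr hG hr hF)) where
  t1 := hΘ.E12_lift₁₂_eq_E23_lift₂₃ hbr hr hF
  t2 := lift₂₃_E23 hbr hG hr
  t3 := lift₁₂_E12 hbr hG hr
  g1a x y := by
    simp only [Equiv.ofBijective_apply, lift₁₂, Equiv.prodAssoc_apply, hΘ.one_right,
      hbr.diagAct_one hr, hbr.sigma_one_right hr]
  g1b x y := by
    simp only [Equiv.ofBijective_apply, lift₂₃, hΘ.one_left, hbr.diagAct_one hr,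
      hbr.sigma_one_right hr]
  g2a x := by rw [hF, hΘ.one_left, hbr.sigma_one_left hr, hbr.sigma_one_right hr]
  g2b x := by rw [hF, hΘ.one_right, hbr.sigma_one_left hr, hbr.sigma_one_right hr]
  g3 := M23_lift₂₃ hbr hr hF
  g4 := M12_lift₁₂ hbr hr hF

end IsThetaCotwist

end Cotwist

theorem theta_cotwist_gives_brace {G : Type*} (mul : G → G → G) (e : G)
    (inv : G → G) (hG : IsGroup mul e inv)
    (r FΘ : (G × G) ≃ (G × G)) (σ γ : G → G → G) (Θ₁ Θ₂ : G → G → G)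
    (hbr : IsBraidingOp mul e r)
    (hr : ∀ x y, r (x, y) = (σ x y, γ y x))
    (hFΘ : ∀ g h, FΘ (g, h) = (σ (Θ₁ g h) g, σ (Θ₂ g h) h))
    (hΘe : ∀ a, Θ₂ e a = e ∧ Θ₁ a e = e)
    (hΘ1 : ∀ a b c, mul (Θ₁ (σ (Θ₁ (mul a b) c) a) (σ (γ a (Θ₁ (mul a b) c)) b))
        (Θ₁ (mul a b) c) = Θ₁ a (mul b c))
    (hΘ2 : ∀ a b c, Θ₂ (mul a b) c =
        mul (Θ₂ (σ (Θ₂ a (mul b c)) b) (σ (γ b (Θ₂ a (mul b c))) c))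
          (γ b (Θ₂ a (mul b c))))
    (hΘ3 : ∀ a b c, mul (Θ₂ (σ (Θ₁ (mul a b) c) a) (σ (γ a (Θ₁ (mul a b) c)) b))
        (γ a (Θ₁ (mul a b) c)) =
      mul (Θ₁ (σ (Θ₂ a (mul b c)) b) (σ (γ b (Θ₂ a (mul b c))) c))
        (Θ₂ a (mul b c))) :
    (∃ inv' : G → G, IsGroup (twistMul mul FΘ) e inv') ∧
    IsBraidingOp (twistMul mul FΘ) e (twisted r FΘ) := by
  have hΘ : IsThetaCotwist mul e σ γ Θ₁ Θ₂ :=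
    ⟨fun a => (hΘe a).2, fun a => (hΘe a).1, hΘ1, hΘ2, hΘ3⟩
  have htwist := hΘ.isGrpTwist hbr hG hr hFΘ
  exact ⟨htwist.exists_isGroup hG, htwist.isBraidingOp hbr⟩

end BraceTwist
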